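/- Let A₀, A₁, A_{m+1}, …, Aₙ be positive semidefinite complex Hermitian n × n matrices with 2 ≤ m ≤ n, and define g(λ) = D(((1−λ)A₀ + λA₁)[m], A_{m+1}, …, Aₙ)^{1/m} for λ ∈ [0,1]. Then g is concave on [0,1]; in particular g(λ) ≥ (1−λ)g(0) + λg(1) for all λ ∈ [0,1]. -/

import Mathlib

open scoped ComplexOrder

/-- The mixed discriminant of `n` complex `n × n` matrices. -/
noncomputable def mixedDisc {n : ℕ} (A : Fin n → Matrix (Fin n) (Fin n) ℂ) : ℂ :=
  (n.factorial : ℂ)⁻¹ * ∑ σ : Equiv.Perm (Fin n), (Matrix.of fun i j => A (σ j) i j).det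

open Polynomial in
/-- The polynomial `s ↦ F (x + s • y)` attached to a multilinear form `F`. -/
noncomputable def MultilinearMap.pencilPoly {ι V : Type*} [Fintype ι] [DecidableEq ι]
    [AddCommGroup V] [Module ℂ V] (F : MultilinearMap ℂ (fun _ : ι => V) ℂ) (x y : ι → V) : ℂ[X] :=
  ∑ T : Finset ι, C (F (T.piecewise y x)) * X ^ T.card

namespace MultilinearMap

variable {ι V : Type*} [DecidableEq ι] [AddCommGroup V] [Module ℂ V]
  (F : MultilinearMap ℂ (fun _ : ι => V) ℂ) (x : ι → V) {y : ι → V}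

theorem map_piecewise_eq_zero {S : Finset ι} (hy : ∀ i ∉ S, y i = 0) {T : Finset ι}
    (hT : ¬ T ⊆ S) :
    F (T.piecewise y x) = 0 := by
  obtain ⟨i, hiT, hiS⟩ := Finset.not_subset.1 hT
  exact F.map_coord_zero i (by simp [hiT, hy i hiS])

variable [Fintype ι] (y)

theorem eval_pencilPoly (s : ℂ) : (F.pencilPoly x y).eval s = F (fun i => x i + s • y i) := by
  have h : (fun i => x i + s • y i) = (fun i => s • y i) + x := by
    ext i; simp [add_comm]
  rw [h, F.map_add_univ, pencilPoly, Polynomial.eval_finsetSum]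
  refine Finset.sum_congr rfl fun T _ => ?_
  have h2 := F.map_piecewise_smul (fun _ => s) (T.piecewise y x) T
  have h3 : T.piecewise (fun i => s • T.piecewise y x i) (T.piecewise y x)
      = T.piecewise (fun i => s • y i) x := by
    ext i; by_cases hi : i ∈ T <;> simp [hi]
  rw [h3] at h2
  rw [h2, Finset.prod_const, Polynomial.eval_mul, Polynomial.eval_C, Polynomial.eval_pow,
    Polynomial.eval_X, smul_eq_mul, mul_comm]

theorem coeff_pencilPoly (d : ℕ) : (F.pencilPoly x y).coeff d =
    ∑ T ∈ Finset.univ.powersetCard d, F (T.piecewise y x) := by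
  simp only [pencilPoly, Polynomial.finsetSum_coeff, Polynomial.coeff_C_mul_X_pow]
  rw [← Finset.sum_filter]
  refine Finset.sum_congr ?_ fun _ _ => rfl
  ext T
  simp [Finset.mem_powersetCard, eq_comm]

theorem eval_derivative_pencilPoly :
    (F.pencilPoly x y).derivative.eval 0 = ∑ i, F (Function.update x i (y i)) := by
  rw [← Polynomial.coeff_zero_eq_eval_zero, Polynomial.coeff_derivative, coeff_pencilPoly]
  simp [Finset.powersetCard_one, Finset.piecewise_singleton]

variable {y} {S : Finset ι}

theorem natDegree_pencilPoly_le (hy : ∀ i ∉ S, y i = 0) :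
    (F.pencilPoly x y).natDegree ≤ S.card := by
  refine Polynomial.natDegree_sum_le_of_forall_le _ _ fun T _ => ?_
  by_cases hT : T ⊆ S
  · exact (Polynomial.natDegree_C_mul_X_pow_le _ _).trans (Finset.card_le_card hT)
  · simp [F.map_piecewise_eq_zero x hy hT]

theorem coeff_card_pencilPoly (hy : ∀ i ∉ S, y i = 0) :
    (F.pencilPoly x y).coeff S.card = F (S.piecewise y x) := by
  rw [coeff_pencilPoly]
  refine Finset.sum_eq_single S (fun T hT hTS => F.map_piecewise_eq_zero x hy fun h => hTS ?_)
    (by simp)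
  exact Finset.eq_of_subset_of_card_le h (Finset.mem_powersetCard.1 hT).2.ge

end MultilinearMap

namespace Polynomial

/-- A property closed under addition holds for the logarithmic derivative of `P` at `0`
once it holds for the inverse of `-z` for every root `z` of `P`. -/
theorem eval_zero_derivative_div_induction {P : ℂ[X]} (hd : 0 < P.natDegree)
    (h0 : P.eval 0 ≠ 0) (p : ℂ → Prop) (hadd : ∀ a b, p a → p b → p (a + b))
    (hp : ∀ z, P.eval z = 0 → p (1 / (0 - z))) :
    p (P.derivative.eval 0 / P.eval 0) := by
  rw [(IsAlgClosed.splits P).eval_derivative_div_eval_of_ne_zero h0]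
  refine Multiset.sum_induction_nonempty p hadd ?_ ?_
  · have := (IsAlgClosed.splits P).roots_ne_zero hd.ne'
    simpa using this
  · intro a ha
    obtain ⟨z, hz, rfl⟩ := Multiset.mem_map.1 ha
    exact hp z (isRoot_of_mem_roots hz)

theorem eval_zero_derivative_ne_zero {P : ℂ[X]} (hd : 0 < P.natDegree)
    (h0 : P.eval 0 ≠ 0) (hroots : ∀ z, P.eval z = 0 → z.im < 0) : P.derivative.eval 0 ≠ 0 := by
  intro h
  have := eval_zero_derivative_div_induction hd h0 (fun z => z.im < 0)
    (fun a b ha hb => by simpa using add_neg ha hb) fun z hz => by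
      have hz' := hroots z hz
      have hpos : 0 < Complex.normSq z := Complex.normSq_pos.2 fun h => by simp [h] at hz'
      simpa [Complex.inv_im] using div_pos (neg_pos.2 hz') hpos
  simp [h] at this

theorem eval_zero_derivative_pos {P : ℂ[X]} (hd : 0 < P.natDegree)
    (h0 : 0 < P.eval 0) (hroots : ∀ z, P.eval z = 0 → z < 0) : 0 < P.derivative.eval 0 := by
  have := eval_zero_derivative_div_induction hd h0.ne' (fun z => 0 < z)
    (fun a b ha hb => add_pos ha hb) fun z hz => by
      have : 0 < 0 - z := sub_pos.2 (hroots z hz)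
      rw [one_div]
      exact RCLike.inv_pos.2 this
  have h := mul_pos this h0
  rwa [div_mul_cancel₀ _ h0.ne'] at h

end Polynomial

/-- Concavity of the geometric mean along segments of positive vectors. -/
theorem geom_mean_superadditive {m : ℕ} (hm : 0 < m) (c : ℝ) (hc : 0 ≤ c) (u v : Fin m → ℝ)
    (hu : ∀ i, 0 < u i) (hv : ∀ i, 0 < v i) {a b : ℝ} (ha : 0 ≤ a) (hb : 0 ≤ b)
    (hab : a + b = 1) :
    a * (c * ∏ i, u i) ^ ((1 : ℝ) / m) + b * (c * ∏ i, v i) ^ ((1 : ℝ) / m) ≤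
      (c * ∏ i, (a * u i + b * v i)) ^ ((1 : ℝ) / m) := by
  have hm' : (m : ℝ) ≠ 0 := by positivity
  have hz : ∀ i, 0 < a * u i + b * v i := fun i => by
    rcases ha.eq_or_lt with rfl | ha
    · simp_all
    · have := mul_pos ha (hu i); have := mul_nonneg hb (hv i).le; linarith
  have key : ∀ w : Fin m → ℝ, (∀ i, 0 < w i) →
      (∏ i, w i) ^ ((1 : ℝ) / m) ≤
        (∑ i, ((1 : ℝ) / m) * (w i / (a * u i + b * v i))) *
          (∏ i, (a * u i + b * v i)) ^ ((1 : ℝ) / m) := by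
    intro w hw
    have h := Real.geom_mean_le_arith_mean_weighted Finset.univ (fun _ => (1 : ℝ) / m)
      (fun i => w i / (a * u i + b * v i)) (fun i _ => by positivity) (by simp [hm'])
      (fun i _ => (div_pos (hw i) (hz i)).le)
    rw [Real.finsetProd_rpow _ _ (fun i _ => (div_pos (hw i) (hz i)).le),
      Finset.prod_div_distrib, Real.div_rpow (Finset.prod_nonneg fun i _ => (hw i).le)
      (Finset.prod_nonneg fun i _ => (hz i).le), div_le_iff₀
      (Real.rpow_pos_of_pos (Finset.prod_pos fun i _ => hz i) _)] at h
    exact h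
  rw [Real.mul_rpow hc (Finset.prod_nonneg fun i _ => (hu i).le),
    Real.mul_rpow hc (Finset.prod_nonneg fun i _ => (hv i).le),
    Real.mul_rpow hc (Finset.prod_nonneg fun i _ => (hz i).le)]
  have hsum : a * (∑ i, ((1 : ℝ) / m) * (u i / (a * u i + b * v i))) +
      b * (∑ i, ((1 : ℝ) / m) * (v i / (a * u i + b * v i))) = 1 := by
    rw [Finset.mul_sum, Finset.mul_sum, ← Finset.sum_add_distrib]
    have : ∀ i, a * ((1 : ℝ) / m * (u i / (a * u i + b * v i))) +
        b * ((1 : ℝ) / m * (v i / (a * u i + b * v i))) = 1 / m := fun i => by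
      have := (hz i).ne'
      field_simp
    rw [Finset.sum_congr rfl fun i _ => this i]
    simp [hm']
  have hcm : 0 ≤ c ^ ((1 : ℝ) / m) := by positivity
  have h1 := mul_le_mul_of_nonneg_left (key u hu) (mul_nonneg hcm ha)
  have h2 := mul_le_mul_of_nonneg_left (key v hv) (mul_nonneg hcm hb)
  calc _ ≤ c ^ ((1 : ℝ) / m) * (∏ i, (a * u i + b * v i)) ^ ((1 : ℝ) / m) *
        (a * (∑ i, ((1 : ℝ) / m) * (u i / (a * u i + b * v i))) +
          b * (∑ i, ((1 : ℝ) / m) * (v i / (a * u i + b * v i)))) := by linarith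
    _ = _ := by rw [hsum, mul_one]

/-- A complex polynomial of degree at most `m`, positive at `0`, all of whose roots are real and
outside `[0, 1]`, factors as a constant times `m` affine functions positive on `[0, 1]`. -/
theorem Polynomial.exists_eval_eq_prod_affine {P : Polynomial ℂ} {m : ℕ} (hd : P.natDegree ≤ m)
    (h0 : 0 < P.eval 0)
    (hroots : ∀ z, P.eval z = 0 → ∃ r : ℝ, r < 1 ∧ z⁻¹ = r) :
    ∃ r : Fin m → ℝ, (∀ i, r i < 1) ∧
      ∀ l : ℝ, (P.eval (l : ℂ)).re = (P.eval 0).re * ∏ i, (1 - l * r i) := by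
  have hcard : P.roots.card = P.natDegree := (IsAlgClosed.splits P).natDegree_eq_card_roots.symm
  set s : Multiset ℂ := P.roots.map (·⁻¹) + Multiset.replicate (m - P.natDegree) 0 with hs
  have hscard : s.toList.length = m := by
    simp [hs, hcard]; omega
  have hsr : ∀ w ∈ s, ∃ r : ℝ, r < 1 ∧ w = r := by
    intro w hw
    rcases Multiset.mem_add.1 hw with hw | hw
    · obtain ⟨z, hz, rfl⟩ := Multiset.mem_map.1 hw
      exact hroots z (isRoot_of_mem_roots hz)
    · exact ⟨0, one_pos, by simpa using Multiset.eq_of_mem_replicate hw⟩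
  have heval : ∀ l : ℂ, P.eval l = P.eval 0 * (s.map fun w => 1 - l * w).prod := by
    intro l
    rw [(IsAlgClosed.splits P).eval_eq_prod_roots l, (IsAlgClosed.splits P).eval_eq_prod_roots 0]
    simp only [hs, Multiset.map_add, Multiset.prod_add, Multiset.map_replicate,
      Multiset.prod_replicate, Multiset.map_map, mul_zero, sub_zero, one_pow, mul_one]
    rw [mul_assoc, ← Multiset.prod_map_mul]
    congr 2
    refine Multiset.map_congr rfl fun z hz => ?_
    have hz0 : z ≠ 0 := by
      rintro rfl
      exact h0.ne' (isRoot_of_mem_roots hz)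
    simp only [Function.comp]
    field_simp
    ring
  choose! r hr1 hr2 using hsr
  have hmem : ∀ i : Fin m, s.toList.get (i.cast hscard.symm) ∈ s := fun i =>
    Multiset.mem_toList.1 (List.get_mem _ _)
  refine ⟨fun i => r (s.toList.get (i.cast hscard.symm)), fun i => hr1 _ (hmem i), fun l => ?_⟩
  have hprod : (s.map fun w => 1 - (l : ℂ) * w).prod =
      ((∏ i : Fin m, (1 - l * r (s.toList.get (i.cast hscard.symm))) : ℝ) : ℂ) := by
    push_cast
    conv_lhs => rw [← Multiset.coe_toList s, Multiset.map_coe, Multiset.prod_coe]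
    rw [← Fin.prod_univ_fun_getElem]
    refine Fintype.prod_equiv (finCongr hscard) _ _ fun i => ?_
    have := hr2 _ (Multiset.mem_toList.1 (List.get_mem s.toList i))
    simpa using Or.inl this
  rw [heval, hprod, Complex.re_mul_ofReal]

theorem Polynomial.concaveOn_rpow_eval {P : Polynomial ℂ} {m : ℕ} (hm : 0 < m)
    (hd : P.natDegree ≤ m) (h0 : 0 < P.eval 0)
    (hroots : ∀ z, P.eval z = 0 → ∃ r : ℝ, r < 1 ∧ z⁻¹ = r) :
    ConcaveOn ℝ (Set.Icc (0 : ℝ) 1) fun l : ℝ => (P.eval (l : ℂ)).re ^ ((1 : ℝ) / m) := by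
  obtain ⟨r, hr, hP⟩ := Polynomial.exists_eval_eq_prod_affine hd h0 hroots
  have hpos : ∀ l ∈ Set.Icc (0 : ℝ) 1, ∀ i, 0 < 1 - l * r i := fun l hl i => by
    nlinarith [hl.1, hl.2, mul_nonneg hl.1 (sub_pos.2 (hr i)).le, hr i]
  refine ⟨convex_Icc 0 1, fun u hu v hv a b ha hb hab => ?_⟩
  simp only [hP, smul_eq_mul]
  have h := geom_mean_superadditive hm (P.eval 0).re (Complex.pos_iff.1 h0).1.le
    (fun i => 1 - u * r i) (fun i => 1 - v * r i) (hpos u hu) (hpos v hv) ha hb hab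
  refine h.trans_eq ?_
  congr 2
  refine Finset.prod_congr rfl fun i _ => ?_
  linear_combination hab

section MixedDiscriminant

variable {n : ℕ}

/-- The mixed discriminant as a multilinear form. -/
noncomputable def mixedDiscMultilinear (n : ℕ) :
    MultilinearMap ℂ (fun _ : Fin n => Matrix (Fin n) (Fin n) ℂ) ℂ :=
  (n.factorial : ℂ)⁻¹ • ∑ σ : Equiv.Perm (Fin n),
    MultilinearMap.domDomCongr σ
      ((Matrix.detRowAlternating (R := ℂ) (n := Fin n)).toMultilinearMap.compLinearMap fun j =>
        LinearMap.pi fun i => Matrix.entryLinearMap ℂ ℂ i j)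

theorem mixedDiscMultilinear_apply (A : Fin n → Matrix (Fin n) (Fin n) ℂ) :
    mixedDiscMultilinear n A = mixedDisc A := by
  simp only [mixedDiscMultilinear, mixedDisc, smul_apply, sum_apply,
    smul_eq_mul]
  congr 1
  refine Finset.sum_congr rfl fun σ _ => ?_
  rw [← Matrix.det_transpose]
  rfl

theorem mixedDisc_comp_perm (A : Fin n → Matrix (Fin n) (Fin n) ℂ) (τ : Equiv.Perm (Fin n)) :
    mixedDisc (A ∘ τ) = mixedDisc A := by
  unfold mixedDisc
  congr 1
  exact Fintype.sum_equiv (Equiv.mulLeft τ) _ _ fun σ => rfl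

theorem mixedDisc_const (M : Matrix (Fin n) (Fin n) ℂ) : mixedDisc (fun _ => M) = M.det := by
  have h : (Matrix.of fun i j => M i j) = M := rfl
  simp [mixedDisc, h, Fintype.card_perm, Nat.factorial_ne_zero]

theorem continuous_mixedDisc :
    Continuous (mixedDisc : (Fin n → Matrix (Fin n) (Fin n) ℂ) → ℂ) := by
  unfold mixedDisc
  refine continuous_const.mul (continuous_finsetSum _ fun σ _ => Continuous.matrix_det ?_)
  refine continuous_matrix fun i j => ?_
  have h : Continuous fun A : Fin n → Matrix (Fin n) (Fin n) ℂ => A (σ j) :=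
    continuous_apply (σ j)
  exact h.matrix_elem i j

/-- The mixed discriminant of `k` copies of `M` and the matrices in slots `k, …, n - 1`
of `rest`. -/
noncomputable def mixedDiscPow (k : ℕ) (rest : Fin n → Matrix (Fin n) (Fin n) ℂ)
    (M : Matrix (Fin n) (Fin n) ℂ) : ℂ :=
  mixedDisc fun j : Fin n => if (j : ℕ) < k then M else rest j

theorem card_filter_val_lt {k : ℕ} (hk : k ≤ n) :
    (Finset.univ.filter fun j : Fin n => (j : ℕ) < k).card = k := by
  simp [Fin.card_filter_val_lt, hk]

theorem mixedDiscPow_smul {k : ℕ} (hk : k ≤ n) (rest : Fin n → Matrix (Fin n) (Fin n) ℂ)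
    (c : ℂ) (M : Matrix (Fin n) (Fin n) ℂ) :
    mixedDiscPow k rest (c • M) = c ^ k * mixedDiscPow k rest M := by
  have h := (mixedDiscMultilinear n).map_smul_univ (fun j : Fin n => if (j : ℕ) < k then c else 1)
    fun j : Fin n => if (j : ℕ) < k then M else rest j
  rw [mixedDiscMultilinear_apply, mixedDiscMultilinear_apply, Finset.prod_ite,
    Finset.prod_const, Finset.prod_const_one, mul_one, card_filter_val_lt hk] at h
  rw [mixedDiscPow, mixedDiscPow, ← smul_eq_mul, ← h]
  congr 1
  ext1 j
  split_ifs <;> simp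

/-- The polynomial `s ↦ mixedDiscPow k rest (M + s • A)`. -/
noncomputable def mixedDiscPencil (k : ℕ) (rest : Fin n → Matrix (Fin n) (Fin n) ℂ)
    (M A : Matrix (Fin n) (Fin n) ℂ) : Polynomial ℂ :=
  (mixedDiscMultilinear n).pencilPoly (fun j : Fin n => if (j : ℕ) < k then M else rest j)
    fun j : Fin n => if (j : ℕ) < k then A else 0

section Pencil

variable (k : ℕ) (rest : Fin n → Matrix (Fin n) (Fin n) ℂ) (M A : Matrix (Fin n) (Fin n) ℂ)

theorem eval_mixedDiscPencil (s : ℂ) :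
    (mixedDiscPencil k rest M A).eval s = mixedDiscPow k rest (M + s • A) := by
  rw [mixedDiscPencil, MultilinearMap.eval_pencilPoly, mixedDiscMultilinear_apply, mixedDiscPow]
  congr 1
  ext1 j
  split_ifs <;> simp

theorem eval_zero_mixedDiscPencil :
    (mixedDiscPencil k rest M A).eval 0 = mixedDiscPow k rest M := by
  simp [eval_mixedDiscPencil]

variable {k}

theorem natDegree_mixedDiscPencil_le (hk : k ≤ n) :
    (mixedDiscPencil k rest M A).natDegree ≤ k := by
  refine ((mixedDiscMultilinear n).natDegree_pencilPoly_le
    (S := Finset.univ.filter fun j : Fin n => (j : ℕ) < k) _ fun i hi => ?_).trans_eq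
    (card_filter_val_lt hk)
  simp_all

theorem coeff_mixedDiscPencil (hk : k ≤ n) :
    (mixedDiscPencil k rest M A).coeff k = mixedDiscPow k rest A := by
  have h := (mixedDiscMultilinear n).coeff_card_pencilPoly
    (S := Finset.univ.filter fun j : Fin n => (j : ℕ) < k)
    (y := fun j : Fin n => if (j : ℕ) < k then A else 0)
    (fun j : Fin n => if (j : ℕ) < k then M else rest j) fun i hi => by simp_all
  rw [card_filter_val_lt hk, mixedDiscMultilinear_apply] at h
  rw [mixedDiscPencil, h, mixedDiscPow]
  congr 1
  ext1 j
  by_cases hj : (j : ℕ) < k <;> simp [Finset.piecewise, hj]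

theorem natDegree_mixedDiscPencil_pos (hk0 : 0 < k) (hk : k ≤ n)
    (hA : mixedDiscPow k rest A ≠ 0) : 0 < (mixedDiscPencil k rest M A).natDegree :=
  hk0.trans_le (Polynomial.le_natDegree_of_ne_zero (by rwa [coeff_mixedDiscPencil _ _ _ hk]))

theorem eval_derivative_mixedDiscPencil (hk : k < n) :
    (mixedDiscPencil (k + 1) rest M (rest ⟨k, hk⟩)).derivative.eval 0 =
      (k + 1) * mixedDiscPow k rest M := by
  rw [mixedDiscPencil, MultilinearMap.eval_derivative_pencilPoly]
  have h : ∀ i : Fin n, mixedDiscMultilinear n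
      (Function.update (fun j : Fin n => if (j : ℕ) < k + 1 then M else rest j) i
        (if (i : ℕ) < k + 1 then rest ⟨k, hk⟩ else 0)) =
      if (i : ℕ) < k + 1 then mixedDiscPow k rest M else 0 := by
    intro i
    split_ifs with hi
    · rw [mixedDiscMultilinear_apply, mixedDiscPow, ← mixedDisc_comp_perm _ (Equiv.swap i ⟨k, hk⟩)]
      congr 1
      ext1 j
      simp only [Function.comp]
      rcases eq_or_ne j ⟨k, hk⟩ with rfl | hj
      · simp
      have hjk : (j : ℕ) ≠ k := fun h => hj (Fin.ext h)
      rcases eq_or_ne j i with rfl | hji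
      · rw [Equiv.swap_apply_left, Function.update_of_ne hj.symm]
        have : (j : ℕ) < k := by omega
        simp [this]
      · rw [Equiv.swap_apply_of_ne_of_ne hji hj, Function.update_of_ne hji]
        have : (j : ℕ) < k + 1 ↔ (j : ℕ) < k := by omega
        simp [this]
    · exact MultilinearMap.map_coord_zero _ i (by simp)
  rw [Finset.sum_congr rfl fun i _ => h i, Finset.sum_ite, Finset.sum_const, Finset.sum_const_zero,
    add_zero, card_filter_val_lt hk, nsmul_eq_mul]
  push_cast
  rfl

end Pencil

/-- Matrices with positive definite imaginary part. -/
def Matrix.ImPosDef (M : Matrix (Fin n) (Fin n) ℂ) : Prop :=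
  ∀ v : Fin n → ℂ, v ≠ 0 → 0 < (star v ⬝ᵥ M.mulVec v).im

namespace Matrix

variable {M A B : Matrix (Fin n) (Fin n) ℂ}

theorem ImPosDef.det_ne_zero (hM : M.ImPosDef) : M.det ≠ 0 := by
  intro h
  obtain ⟨v, hv, hMv⟩ := Matrix.exists_mulVec_eq_zero_iff.2 h
  simpa [hMv] using hM v hv

theorem im_dotProduct_smul (hA : A.PosDef) (s : ℂ) (v : Fin n → ℂ) :
    (star v ⬝ᵥ (s • A).mulVec v).im = s.im * (star v ⬝ᵥ A.mulVec v).re := by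
  have h := (Complex.nonneg_iff.1 (hA.posSemidef.dotProduct_mulVec_nonneg v)).2
  rw [Matrix.smul_mulVec, dotProduct_smul, smul_eq_mul, Complex.mul_im, ← h]
  simp

theorem ImPosDef.add_smul (hM : M.ImPosDef) (hA : A.PosDef) {s : ℂ} (hs : 0 ≤ s.im) :
    (M + s • A).ImPosDef := by
  intro v hv
  rw [Matrix.add_mulVec, dotProduct_add, Complex.add_im, im_dotProduct_smul hA]
  have h := (Complex.pos_iff.1 (hA.dotProduct_mulVec_pos hv)).1
  exact add_pos_of_pos_of_nonneg (hM v hv) (mul_nonneg hs h.le)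

theorem PosDef.imPosDef_smul (hA : A.PosDef) {s : ℂ} (hs : 0 < s.im) : (s • A).ImPosDef := by
  intro v hv
  rw [im_dotProduct_smul hA]
  exact mul_pos hs (Complex.pos_iff.1 (hA.dotProduct_mulVec_pos hv)).1

theorem PosDef.imPosDef_add_smul (hA : A.PosDef) (hB : B.PosDef) {s : ℂ} (hs : 0 < s.im) :
    (A + s • B).ImPosDef := by
  intro v hv
  have h := (Complex.pos_iff.1 (hA.dotProduct_mulVec_pos hv)).2
  rw [Matrix.add_mulVec, dotProduct_add, Complex.add_im, ← h, zero_add]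
  exact hB.imPosDef_smul hs v hv

end Matrix

open Matrix

/-- If `mixedDiscPow k rest` has no zeros with positive definite imaginary part, then it is
real rooted along positive definite directions. -/
theorem neg_of_mixedDiscPow_add_smul_eq_zero {k : ℕ} (hk : k ≤ n)
    {rest : Fin n → Matrix (Fin n) (Fin n) ℂ}
    (h : ∀ M : Matrix (Fin n) (Fin n) ℂ, M.ImPosDef → mixedDiscPow k rest M ≠ 0)
    {A B : Matrix (Fin n) (Fin n) ℂ} (hA : A.PosDef) (hB : B.PosDef) {s : ℂ}
    (hs : mixedDiscPow k rest (A + s • B) = 0) : s < 0 := by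
  have hc : ∀ c : ℂ, ¬ (c • (A + s • B)).ImPosDef := fun c hc =>
    h _ hc (by rw [mixedDiscPow_smul hk, hs, mul_zero])
  have him : s.im = 0 := by
    rcases lt_trichotomy s.im 0 with hlt | heq | hgt
    · refine (hc (starRingEnd ℂ s) ?_).elim
      have : starRingEnd ℂ s • (A + s • B) = starRingEnd ℂ s • A + (Complex.normSq s : ℂ) • B := by
        rw [smul_add, smul_smul, mul_comm, Complex.mul_conj]
      rw [this]
      exact (hA.imPosDef_smul (by simpa using hlt)).add_smul hB (by simp)
    · exact heq
    · exact (hc 1 (by rw [one_smul]; exact hA.imPosDef_add_smul hB hgt)).elim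
  rw [Complex.neg_iff]
  refine ⟨?_, him⟩
  by_contra! hre
  refine hc Complex.I ?_
  rw [smul_add, smul_smul]
  exact (hA.imPosDef_smul (by simp)).add_smul hB (by simpa using hre)

/-- Stability and positivity of mixed discriminants with positive definite entries. -/
theorem mixedDiscPow_stable_and_pos {k : ℕ} (hk : k ≤ n)
    {rest : Fin n → Matrix (Fin n) (Fin n) ℂ}
    (hrest : ∀ j : Fin n, k ≤ (j : ℕ) → (rest j).PosDef) :
    (∀ M : Matrix (Fin n) (Fin n) ℂ, M.ImPosDef → mixedDiscPow k rest M ≠ 0) ∧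
      ∀ M : Matrix (Fin n) (Fin n) ℂ, M.PosDef → 0 < mixedDiscPow k rest M := by
  induction hk using Nat.decreasingInduction with
  | self =>
    have h : ∀ M, mixedDiscPow n rest M = M.det := fun M => by
      simp [mixedDiscPow, mixedDisc_const]
    exact ⟨fun M hM => h M ▸ hM.det_ne_zero, fun M hM => h M ▸ hM.det_pos⟩
  | of_succ k hk ih =>
    obtain ⟨ih₁, ih₂⟩ := ih fun j hj => hrest j (by omega)
    have hA : (rest ⟨k, hk⟩).PosDef := hrest _ le_rfl
    have hdeg := fun M => natDegree_mixedDiscPencil_pos rest M (rest ⟨k, hk⟩) k.succ_pos hk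
      (ih₂ _ hA).ne'
    have hder := fun M => eval_derivative_mixedDiscPencil rest M hk
    refine ⟨fun M hM h0 => ?_, fun M hM => ?_⟩
    · refine Polynomial.eval_zero_derivative_ne_zero (hdeg M) ?_ (fun z hz => ?_)
        (by rw [hder, h0, mul_zero])
      · rw [eval_zero_mixedDiscPencil]
        exact ih₁ M hM
      · by_contra! hz'
        rw [eval_mixedDiscPencil] at hz
        exact ih₁ _ (hM.add_smul hA hz') hz
    · have h := Polynomial.eval_zero_derivative_pos (hdeg M)
        (by rw [eval_zero_mixedDiscPencil]; exact ih₂ M hM) fun z hz =>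
          neg_of_mixedDiscPow_add_smul_eq_zero hk ih₁ hM hA (by rwa [eval_mixedDiscPencil] at hz)
      rw [hder] at h
      have hk' : (0 : ℂ) < k + 1 := by exact_mod_cast k.succ_pos
      have := mul_pos (RCLike.inv_pos.2 hk') h
      rwa [inv_mul_cancel_left₀ hk'.ne'] at this

theorem concaveOn_mixedDiscPow_of_posDef {m : ℕ} (hm : 0 < m) (hmn : m ≤ n)
    {A₀ A₁ : Matrix (Fin n) (Fin n) ℂ} {rest : Fin n → Matrix (Fin n) (Fin n) ℂ}
    (hA₀ : A₀.PosDef) (hA₁ : A₁.PosDef) (hrest : ∀ j : Fin n, m ≤ (j : ℕ) → (rest j).PosDef) :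
    ConcaveOn ℝ (Set.Icc (0 : ℝ) 1) fun l : ℝ =>
      (mixedDiscPow m rest ((1 - l) • A₀ + l • A₁)).re ^ ((1 : ℝ) / m) := by
  obtain ⟨hst, hpos⟩ := mixedDiscPow_stable_and_pos hmn hrest
  have h := Polynomial.concaveOn_rpow_eval (P := mixedDiscPencil m rest A₀ (A₁ - A₀)) hm
    (natDegree_mixedDiscPencil_le _ _ _ hmn)
    (by rw [eval_zero_mixedDiscPencil]; exact hpos _ hA₀) fun z hz => ?_
  · refine h.congr fun l _ => ?_
    simp only [eval_mixedDiscPencil]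
    congr 3
    ext i j
    simp
    ring
  · rw [eval_mixedDiscPencil] at hz
    rcases eq_or_ne z 1 with rfl | hz1
    · exact absurd hz (by simpa using (hpos _ hA₁).ne')
    have hz1' : 1 - z ≠ 0 := sub_ne_zero.2 hz1.symm
    have hw : mixedDiscPow m rest (A₀ + (z / (1 - z)) • A₁) = 0 := by
      have : A₀ + z • (A₁ - A₀) = (1 - z) • (A₀ + (z / (1 - z)) • A₁) := by
        rw [smul_add, smul_smul, mul_div_cancel₀ _ hz1']
        module
      rw [this, mixedDiscPow_smul hmn] at hz
      exact (mul_eq_zero.1 hz).resolve_left (pow_ne_zero _ hz1')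
    have hneg := Complex.neg_iff.1 (neg_of_mixedDiscPow_add_smul_eq_zero hmn hst hA₀ hA₁ hw)
    set w := z / (1 - z) with hwdef
    have hw_re : w = (w.re : ℂ) := Complex.ext (by simp) (by simp [hneg.2])
    have hz0 : z ≠ 0 := by
      intro h
      simp [hwdef, h] at hneg
    refine ⟨1 + w.re⁻¹, by linarith [inv_lt_zero.2 hneg.1], ?_⟩
    push_cast
    rw [← hw_re, hwdef]
    field_simp
    ring

end MixedDiscriminant

/-- Brunn–Minkowski type theorem for mixed discriminants. For positive
semidefinite Hermitian `A₀, A₁, A_{m+1},…,Aₙ` and `2 ≤ m ≤ n`, the function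
`g(λ) = D(((1−λ)A₀ + λA₁)[m], A_{m+1},…,Aₙ)^{1/m}` is concave on `[0,1]`; in particular
`g(λ) ≥ (1−λ)g(0) + λg(1)` there. (Slots `m+1,…,n` of `rest` hold `A_{m+1},…,Aₙ`.) -/
theorem mixedDisc_brunn_minkowski (n m : ℕ) (hm : 2 ≤ m) (hmn : m ≤ n)
    (A₀ A₁ : Matrix (Fin n) (Fin n) ℂ)
    (rest : Fin n → Matrix (Fin n) (Fin n) ℂ)
    (hA₀ : A₀.PosSemidef) (hA₁ : A₁.PosSemidef)
    (hrest : ∀ k : Fin n, m ≤ (k : ℕ) → (rest k).PosSemidef) :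
    ConcaveOn ℝ (Set.Icc (0 : ℝ) 1) (fun l : ℝ =>
        (mixedDisc fun k : Fin n =>
          if (k : ℕ) < m then (1 - l) • A₀ + l • A₁ else rest k).re ^ ((1 : ℝ) / m)) ∧
      ∀ l ∈ Set.Icc (0 : ℝ) 1,
        (1 - l) * (mixedDisc fun k : Fin n =>
            if (k : ℕ) < m then A₀ else rest k).re ^ ((1 : ℝ) / m) +
          l * (mixedDisc fun k : Fin n =>
            if (k : ℕ) < m then A₁ else rest k).re ^ ((1 : ℝ) / m) ≤
        (mixedDisc fun k : Fin n =>
          if (k : ℕ) < m then (1 - l) • A₀ + l • A₁ else rest k).re ^ ((1 : ℝ) / m) := by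
  have hconc : ConcaveOn ℝ (Set.Icc (0 : ℝ) 1) fun l : ℝ =>
      (mixedDiscPow m rest ((1 - l) • A₀ + l • A₁)).re ^ ((1 : ℝ) / m) := by
    have hm0 : 0 < m := by omega
    let g : ℝ → ℝ → ℝ := fun ε l =>
      (mixedDiscPow m (fun j => rest j + ε • 1)
        ((1 - l) • (A₀ + ε • 1) + l • (A₁ + ε • 1))).re ^ ((1 : ℝ) / m)
    have hcont : ∀ l, Continuous fun ε => g ε l := fun l => by
      refine Continuous.rpow_const (Complex.continuous_re.comp
        (continuous_mixedDisc.comp (continuous_pi fun j => ?_))) fun _ => Or.inr (by positivity)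
      split_ifs <;> fun_prop
    have hg0 : ∀ l, g 0 l = (mixedDiscPow m rest ((1 - l) • A₀ + l • A₁)).re ^ ((1 : ℝ) / m) :=
      fun l => by simp [g]
    have hlim : ∀ l, Filter.Tendsto (fun ε => g ε l) (nhdsWithin 0 (Set.Ioi 0))
        (nhds ((mixedDiscPow m rest ((1 - l) • A₀ + l • A₁)).re ^ ((1 : ℝ) / m))) := fun l =>
      hg0 l ▸ ((hcont l).tendsto 0).mono_left nhdsWithin_le_nhds
    refine ⟨convex_Icc 0 1, fun u hu v hv a b ha hb hab => ?_⟩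
    refine le_of_tendsto_of_tendsto (((hlim u).const_smul a).add ((hlim v).const_smul b))
      (hlim _) ?_
    filter_upwards [self_mem_nhdsWithin] with ε hε
    have hε1 : (ε • (1 : Matrix (Fin n) (Fin n) ℂ)).PosDef := Matrix.PosDef.one.smul hε
    exact (concaveOn_mixedDiscPow_of_posDef hm0 hmn (Matrix.PosDef.posSemidef_add hA₀ hε1)
      (Matrix.PosDef.posSemidef_add hA₁ hε1) fun j hj =>
        Matrix.PosDef.posSemidef_add (hrest j hj) hε1).2 hu hv ha hb hab
  refine ⟨hconc, fun l hl => ?_⟩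
  have h := hconc.2 (x := 0) (by simp) (y := 1) (by simp) (sub_nonneg.2 hl.2) hl.1
    (sub_add_cancel 1 l)
  simpa [mixedDiscPow] using h
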